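/- arXiv:math/0703332 — 2 statements merged into one kernel-verified Lean document; each statement's English description precedes it below -/
import Mathlib

section
/- Let n ≥ 1, m > 0 and ε_m = min(1/(32(1+m)), 1/(32·m·(1+m))). Let H : ℝ^{2n} → M_{2n}(ℝ) be differentiable and x, p ∈ ℝ^{2n} with ‖x‖ ≤ m, ‖p‖ ≤ m, satisfying ‖H(x)‖ + (Σ_{i=1}^{2n} ‖(∂H_{i,j}/∂x_k(x))_{j,k}‖²)^{1/2} ≤ ε_m, and let A_H(x) be the matrix with entries Σ_i 2(x_i − p_i)·∂H_{i,j}/∂x_k(x). Let D_w be a symmetric 2n×2n real matrix and A_w a 2n×2n real matrix, and suppose λ₀ ≥ 0 is such that Q(J_st + H(x), D_w, A_w, X) ≥ λ₀‖X‖² for all X. Then for every δ with 0 ≤ δ ≤ (2/9)·λ₀ and every X ∈ ℝ^{2n}: Q(J_st + H(x), D_w − 2δ·I_{2n}, A_w − δ·A_H(x), X) ≥ (λ₀ − (9/2)δ)·‖X‖² ≥ 0. (This says that if w is J-plurisubharmonic with Levi form bounded below by λ₀, then w − δ‖·−p‖² is still plurisubharmonic, with Levi form bounded below by λ₀ − (9/2)δ.)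 -/
open Matrix

/-- The Euclidean norm of a real vector. -/
noncomputable def evnorm {m : Type*} [Fintype m] (x : m → ℝ) : ℝ :=
  Real.sqrt (∑ i, x i ^ 2)

/-- The operator norm of a real matrix with respect to the Euclidean norm. -/
noncomputable def opnorm {m : Type*} [Fintype m] [DecidableEq m]
    (M : Matrix m m ℝ) : ℝ :=
  ‖Matrix.toEuclideanCLM (𝕜 := ℝ) M‖

/-- The coordinate expression of the Levi form:
`Q(J,D,A,X) = XᵀDX + (JX)ᵀD(JX) + Xᵀ(A − Aᵀ)(JX)`. -/
noncomputable def LeviQ {m : Type*} [Fintype m] (J D A : Matrix m m ℝ) (X : m → ℝ) : ℝ :=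
  X ⬝ᵥ D.mulVec X + (J.mulVec X) ⬝ᵥ D.mulVec (J.mulVec X)
    + X ⬝ᵥ ((A - Aᵀ).mulVec (J.mulVec X))

/-- The standard complex structure `J_st = [[0, −Iₙ],[Iₙ, 0]]` on `ℝ^{2n} = ℝⁿ ⊕ ℝⁿ`. -/
def Jstd (n : ℕ) : Matrix (Fin n ⊕ Fin n) (Fin n ⊕ Fin n) ℝ :=
  Matrix.fromBlocks 0 (-1) 1 0

/-!
Since `Q(J, D, A, X)` is linear in `(D, A)`, passing from `w` to `w − δ‖· − p‖²` lowers it by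
`δ Q(J, 2I, A_H, X)`, so it suffices that `Q(J, 2I, A_H, X) ≤ (9/2)‖X‖²`. In general `|Q|` is at
most `(‖D‖(1 + ‖J‖²) + 2‖A‖‖J‖)‖X‖²`. The choice of `ε_m` gives `‖J_st + H‖ ≤ 33/32` and, by
Cauchy–Schwarz over the coordinates of `x − p`, `‖A_H‖ ≤ 2 · 2m · ε_m ≤ 1/8`; these make the
factor smaller than `9/2`.
-/

section EuclideanNorms

open scoped Matrix.Norms.L2Operator

variable {ι κ : Type*} [Fintype ι] [Fintype κ]

theorem evnorm_eq_norm (v : ι → ℝ) : evnorm v = ‖WithLp.toLp 2 v‖ := by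
  simp [evnorm, EuclideanSpace.norm_eq]

theorem evnorm_nonneg (v : ι → ℝ) : 0 ≤ evnorm v :=
  Real.sqrt_nonneg _

theorem evnorm_sub_le (v w : ι → ℝ) : evnorm (v - w) ≤ evnorm v + evnorm w := by
  simp only [evnorm_eq_norm, WithLp.toLp_sub]
  exact norm_sub_le _ _

variable [DecidableEq ι]

theorem opnorm_eq_norm (M : Matrix ι ι ℝ) : opnorm M = ‖M‖ :=
  rfl

theorem opnorm_nonneg (M : Matrix ι ι ℝ) : 0 ≤ opnorm M :=
  norm_nonneg _

theorem opnorm_add_le (M N : Matrix ι ι ℝ) : opnorm (M + N) ≤ opnorm M + opnorm N :=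
  norm_add_le M N

theorem opnorm_smul (a : ℝ) (M : Matrix ι ι ℝ) : opnorm (a • M) = |a| * opnorm M :=
  norm_smul a M

theorem opnorm_transpose (M : Matrix ι ι ℝ) : opnorm Mᵀ = opnorm M := by
  simpa only [opnorm_eq_norm, conjTranspose_eq_transpose_of_trivial] using
    l2_opNorm_conjTranspose M

theorem opnorm_sub_transpose_le (M : Matrix ι ι ℝ) : opnorm (M - Mᵀ) ≤ 2 * opnorm M := by
  have h : opnorm (M - Mᵀ) ≤ opnorm M + opnorm Mᵀ := norm_sub_le M Mᵀ
  rwa [opnorm_transpose, ← two_mul] at h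

theorem opnorm_one_le : opnorm (1 : Matrix ι ι ℝ) ≤ 1 := by
  rw [opnorm, map_one]
  exact ContinuousLinearMap.norm_id_le

theorem opnorm_le_one_of_transpose_mul_self {U : Matrix ι ι ℝ} (hU : Uᵀ * U = 1) :
    opnorm U ≤ 1 := by
  have h : opnorm (Uᵀ * U) = opnorm U * opnorm U := by
    simpa only [opnorm_eq_norm, conjTranspose_eq_transpose_of_trivial] using
      l2_opNorm_conjTranspose_mul_self U
  rw [hU, ← sq] at h
  exact (sq_le_one_iff₀ (opnorm_nonneg U)).mp (h ▸ opnorm_one_le)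

theorem evnorm_mulVec_le (M : Matrix ι ι ℝ) (v : ι → ℝ) :
    evnorm (M *ᵥ v) ≤ opnorm M * evnorm v := by
  simp only [evnorm_eq_norm]
  exact l2_opNorm_mulVec M (WithLp.toLp 2 v)

theorem abs_dotProduct_mulVec_le (M : Matrix ι ι ℝ) (v w : ι → ℝ) :
    |v ⬝ᵥ M *ᵥ w| ≤ opnorm M * evnorm v * evnorm w := by
  have inner_eq : v ⬝ᵥ M *ᵥ w = inner ℝ (WithLp.toLp 2 v) (WithLp.toLp 2 (M *ᵥ w)) := by
    rw [EuclideanSpace.inner_toLp_toLp, star_trivial, dotProduct_comm]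
  calc |v ⬝ᵥ M *ᵥ w| ≤ evnorm v * evnorm (M *ᵥ w) := by
        rw [inner_eq, evnorm_eq_norm, evnorm_eq_norm]
        exact abs_real_inner_le_norm _ _
    _ ≤ evnorm v * (opnorm M * evnorm w) := by
        gcongr
        exacts [evnorm_nonneg v, evnorm_mulVec_le M w]
    _ = opnorm M * evnorm v * evnorm w := by ring

theorem opnorm_sum_smul_le (c : κ → ℝ) (B : κ → Matrix ι ι ℝ) :
    opnorm (∑ i, c i • B i) ≤ evnorm c * √(∑ i, opnorm (B i) ^ 2) :=
  calc opnorm (∑ i, c i • B i) ≤ ∑ i, |c i| * opnorm (B i) := by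
        simp only [← opnorm_smul]
        exact norm_sum_le Finset.univ fun i => c i • B i
    _ ≤ √(∑ i, |c i| ^ 2) * √(∑ i, opnorm (B i) ^ 2) :=
        Real.sum_mul_le_sqrt_mul_sqrt _ _ _
    _ = evnorm c * √(∑ i, opnorm (B i) ^ 2) := by simp only [sq_abs, evnorm]

end EuclideanNorms

theorem transpose_mul_self_Jstd (n : ℕ) : (Jstd n)ᵀ * Jstd n = 1 := by
  change (Matrix.J (Fin n) ℝ)ᵀ * Matrix.J (Fin n) ℝ = 1
  rw [J_transpose, Matrix.neg_mul, J_squared, neg_neg]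

theorem opnorm_Jstd_le_one (n : ℕ) : opnorm (Jstd n) ≤ 1 :=
  opnorm_le_one_of_transpose_mul_self (transpose_mul_self_Jstd n)

section LeviForm

variable {ι : Type*} [Fintype ι]

theorem leviQ_sub (J D D' A A' : Matrix ι ι ℝ) (X : ι → ℝ) :
    LeviQ J (D - D') (A - A') X = LeviQ J D A X - LeviQ J D' A' X := by
  simp only [LeviQ, sub_mulVec, dotProduct_sub, transpose_sub]
  ring

theorem leviQ_smul (a : ℝ) (J D A : Matrix ι ι ℝ) (X : ι → ℝ) :
    LeviQ J (a • D) (a • A) X = a * LeviQ J D A X := by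
  simp only [LeviQ, transpose_smul, ← smul_sub, smul_mulVec, dotProduct_smul, smul_eq_mul]
  ring

variable [DecidableEq ι]

theorem abs_leviQ_le (J D A : Matrix ι ι ℝ) (X : ι → ℝ) :
    |LeviQ J D A X| ≤
      (opnorm D * (1 + opnorm J ^ 2) + 2 * opnorm A * opnorm J) * evnorm X ^ 2 := by
  have hX := evnorm_nonneg X
  have hD := opnorm_nonneg D
  have hA := opnorm_nonneg A
  have hJ := opnorm_nonneg J
  have hJX_nonneg := evnorm_nonneg (J *ᵥ X)
  have hJX := evnorm_mulVec_le J X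
  have hessian_X := abs_dotProduct_mulVec_le D X X
  have hessian_JX : |(J *ᵥ X) ⬝ᵥ D *ᵥ (J *ᵥ X)| ≤
      opnorm D * (opnorm J * evnorm X) * (opnorm J * evnorm X) :=
    (abs_dotProduct_mulVec_le D (J *ᵥ X) (J *ᵥ X)).trans (by gcongr)
  have first_order : |X ⬝ᵥ (A - Aᵀ) *ᵥ (J *ᵥ X)| ≤
      2 * opnorm A * evnorm X * (opnorm J * evnorm X) :=
    (abs_dotProduct_mulVec_le (A - Aᵀ) X (J *ᵥ X)).trans (by
      gcongr
      exact opnorm_sub_transpose_le A)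
  calc |LeviQ J D A X|
      ≤ |X ⬝ᵥ D *ᵥ X| + |(J *ᵥ X) ⬝ᵥ D *ᵥ (J *ᵥ X)| + |X ⬝ᵥ (A - Aᵀ) *ᵥ (J *ᵥ X)| :=
        abs_add_three _ _ _
    _ ≤ opnorm D * evnorm X * evnorm X
          + opnorm D * (opnorm J * evnorm X) * (opnorm J * evnorm X)
          + 2 * opnorm A * evnorm X * (opnorm J * evnorm X) := by gcongr
    _ = (opnorm D * (1 + opnorm J ^ 2) + 2 * opnorm A * opnorm J) * evnorm X ^ 2 := by ring

theorem leviQ_two_smul_one_le {J A : Matrix ι ι ℝ} (hJ : opnorm J ≤ 33 / 32)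
    (hA : opnorm A ≤ 1 / 8) (X : ι → ℝ) :
    LeviQ J ((2 : ℝ) • 1) A X ≤ 9 / 2 * evnorm X ^ 2 := by
  have hJ_nonneg := opnorm_nonneg J
  have hI : opnorm ((2 : ℝ) • (1 : Matrix ι ι ℝ)) ≤ 2 := by
    rw [opnorm_smul, abs_two]
    linarith [opnorm_one_le (ι := ι)]
  calc LeviQ J ((2 : ℝ) • 1) A X
      ≤ (opnorm ((2 : ℝ) • (1 : Matrix ι ι ℝ)) * (1 + opnorm J ^ 2)
          + 2 * opnorm A * opnorm J) * evnorm X ^ 2 := (le_abs_self _).trans (abs_leviQ_le _ _ _ _)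
    _ ≤ (2 * (1 + (33 / 32) ^ 2) + 2 * (1 / 8) * (33 / 32)) * evnorm X ^ 2 := by gcongr
    _ ≤ 9 / 2 * evnorm X ^ 2 := by
        gcongr
        norm_num

end LeviForm

theorem le_and_mul_le_of_le_min {m ε : ℝ} (hm : 0 < m)
    (hε : ε ≤ min (1 / (32 * (1 + m))) (1 / (32 * m * (1 + m)))) :
    ε ≤ 1 / 32 ∧ m * ε ≤ 1 / 32 := by
  have h_le : 1 / (32 * (1 + m)) ≤ 1 / 32 := by
    gcongr
    linarith
  refine ⟨(hε.trans (min_le_left _ _)).trans h_le, ?_⟩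
  calc m * ε ≤ m * (1 / (32 * m * (1 + m))) := by
        gcongr
        exact hε.trans (min_le_right _ _)
    _ = 1 / (32 * (1 + m)) := by field_simp
    _ ≤ 1 / 32 := h_le

theorem opnorm_of_sum_two_mul_sub_le {ι κ : Type*} [Fintype ι] [DecidableEq ι] [Fintype κ]
    {m : ℝ} {x p : κ → ℝ} (hx : evnorm x ≤ m) (hp : evnorm p ≤ m) (B : κ → Matrix ι ι ℝ) :
    opnorm (Matrix.of fun j k => ∑ i, 2 * (x i - p i) * B i j k) ≤
      4 * (m * √(∑ i, opnorm (B i) ^ 2)) := by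
  have hsum : (Matrix.of fun j k => ∑ i, 2 * (x i - p i) * B i j k) =
      (2 : ℝ) • ∑ i, (x - p) i • B i := by
    ext j k
    simp [Matrix.sum_apply, Finset.mul_sum, mul_assoc]
  have hxp : evnorm (x - p) ≤ 2 * m := by linarith [evnorm_sub_le x p]
  calc opnorm (Matrix.of fun j k => ∑ i, 2 * (x i - p i) * B i j k)
      ≤ 2 * (evnorm (x - p) * √(∑ i, opnorm (B i) ^ 2)) := by
        rw [hsum, opnorm_smul, abs_two]
        gcongr
        exact opnorm_sum_smul_le (x - p) B
    _ ≤ 2 * (2 * m * √(∑ i, opnorm (B i) ^ 2)) := by gcongr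
    _ = 4 * (m * √(∑ i, opnorm (B i) ^ 2)) := by ring

theorem stmt13_general {ι κ : Type*} [Fintype ι] [DecidableEq ι] [Fintype κ] {m : ℝ} (hm : 0 < m)
    {J E : Matrix ι ι ℝ} (hJ : opnorm J ≤ 1) {x p : κ → ℝ} (hx : evnorm x ≤ m)
    (hp : evnorm p ≤ m) (B : κ → Matrix ι ι ℝ)
    (hbound : opnorm E + √(∑ i, opnorm (B i) ^ 2)
      ≤ min (1 / (32 * (1 + m))) (1 / (32 * m * (1 + m))))
    {D A : Matrix ι ι ℝ} {lam₀ δ : ℝ} (hδ0 : 0 ≤ δ) (hδ : δ ≤ (2 / 9) * lam₀) {X : ι → ℝ}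
    (hQ : lam₀ * evnorm X ^ 2 ≤ LeviQ (J + E) D A X) :
    (lam₀ - (9 / 2) * δ) * evnorm X ^ 2 ≤
        LeviQ (J + E) (D - (2 * δ) • (1 : Matrix ι ι ℝ))
          (A - δ • (Matrix.of fun j k => ∑ i, 2 * (x i - p i) * B i j k)) X ∧
      0 ≤ (lam₀ - (9 / 2) * δ) * evnorm X ^ 2 := by
  refine ⟨?_, mul_nonneg (by linarith) (sq_nonneg _)⟩
  set A' : Matrix ι ι ℝ := Matrix.of fun j k => ∑ i, 2 * (x i - p i) * B i j k
  obtain ⟨hε, hmε⟩ := le_and_mul_le_of_le_min hm hbound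
  have hB : 0 ≤ √(∑ i, opnorm (B i) ^ 2) := Real.sqrt_nonneg _
  have hJE : opnorm (J + E) ≤ 33 / 32 := by linarith [opnorm_add_le J E]
  have hA' : opnorm A' ≤ 1 / 8 := by
    linarith [opnorm_of_sum_two_mul_sub_le hx hp B, mul_nonneg hm.le (opnorm_nonneg E)]
  calc (lam₀ - (9 / 2) * δ) * evnorm X ^ 2
      = lam₀ * evnorm X ^ 2 - δ * (9 / 2 * evnorm X ^ 2) := by ring
    _ ≤ LeviQ (J + E) D A X - δ * LeviQ (J + E) ((2 : ℝ) • 1) A' X := by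
        gcongr
        exact leviQ_two_smul_one_le hJE hA' X
    _ = LeviQ (J + E) (D - (2 * δ) • 1) (A - δ • A') X := by
        rw [← leviQ_smul, ← leviQ_sub, smul_smul, mul_comm δ]

/-- In the setting of the `ε_m`-bound on `H` at `x` (with
`‖x‖, ‖p‖ ≤ m`), if `w` has Levi data `(D_w, A_w)` with
`Q(J_st + H(x), D_w, A_w, X) ≥ λ₀‖X‖²` for all `X` and `0 ≤ δ ≤ (2/9)λ₀`, then the Levi
data `(D_w − 2δI, A_w − δA_H(x))` of `w − δ‖·−p‖²` satisfies
`Q(J_st + H(x), D_w − 2δI, A_w − δA_H(x), X) ≥ (λ₀ − (9/2)δ)‖X‖² ≥ 0`. -/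
theorem stmt13 {n : ℕ} (hn : 1 ≤ n) (m : ℝ) (hm : 0 < m)
    (H : ((Fin n ⊕ Fin n) → ℝ) → Matrix (Fin n ⊕ Fin n) (Fin n ⊕ Fin n) ℝ)
    (x p : (Fin n ⊕ Fin n) → ℝ)
    (hdiff : ∀ i j, DifferentiableAt ℝ (fun y => H y i j) x)
    (hx : evnorm x ≤ m) (hp : evnorm p ≤ m)
    (hbound : opnorm (H x)
        + Real.sqrt (∑ i, opnorm (Matrix.of fun j k =>
            fderiv ℝ (fun y => H y i j) x (Pi.single k 1)) ^ 2)
      ≤ min (1 / (32 * (1 + m))) (1 / (32 * m * (1 + m))))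
    (Dw Aw : Matrix (Fin n ⊕ Fin n) (Fin n ⊕ Fin n) ℝ) (hDw : Dw.IsSymm)
    (lam₀ : ℝ) (hlam₀ : 0 ≤ lam₀)
    (hQ : ∀ X : (Fin n ⊕ Fin n) → ℝ,
      lam₀ * evnorm X ^ 2 ≤ LeviQ (Jstd n + H x) Dw Aw X)
    (δ : ℝ) (hδ0 : 0 ≤ δ) (hδ : δ ≤ (2 / 9) * lam₀) (X : (Fin n ⊕ Fin n) → ℝ) :
    (lam₀ - (9 / 2) * δ) * evnorm X ^ 2 ≤
        LeviQ (Jstd n + H x)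
          (Dw - (2 * δ) • (1 : Matrix (Fin n ⊕ Fin n) (Fin n ⊕ Fin n) ℝ))
          (Aw - δ • (Matrix.of fun j k => ∑ i, 2 * (x i - p i)
            * fderiv ℝ (fun y => H y i j) x (Pi.single k 1))) X ∧
      0 ≤ (lam₀ - (9 / 2) * δ) * evnorm X ^ 2 := by
  exact stmt13_general hm (opnorm_Jstd_le_one n) hx hp _ hbound hδ0 hδ (hQ X)
end

section
/- Let n ≥ 1 and p ∈ ℝ^{2n} with p ≠ 0, and let D_ln = (1/‖p‖²)·I_{2n} − (2/‖p‖⁴)·p·pᵀ (the real Hessian of x ↦ ln‖x‖ at p). Let H, A be 2n×2n real matrices and h₀, h₁ ≥ 0 with ‖H‖ ≤ h₀ and ‖A‖ ≤ h₁/‖p‖ (operator norms). Then for every X ∈ ℝ^{2n}: Q(J_st + H, D_ln, A, X) ≥ −‖X‖²·( (2/‖p‖²)·h₀ + (1/‖p‖²)·h₀² + (2/‖p‖)·(1 + h₀)·h₁ ). (This is the lower bound on the Levi form of ln‖z‖ with respect to J = J_st + H, using that ‖∇(ln‖z‖)(p)‖ = 1/‖p‖.) -/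
open Matrix

/-!
For a constant orthogonal complex structure `J`, the vectors `X` and `J X` are orthogonal and of
equal length, so Bessel's inequality for `p` makes the Levi form of `ln ‖·‖` nonnegative at `X`.
Passing to `J + H` and adding `A` changes the matrix of the form only by products of `J`, `H`, the
Hessian `D` and `A`. Submultiplicativity of the operator norm bounds the change, with
`‖D‖ ≤ 1 / ‖p‖ ^ 2` because `D` is that multiple of the reflection in the hyperplane `pᗮ`.
-/

section InnerProductSpace

variable {E : Type*} [NormedAddCommGroup E] [InnerProductSpace ℝ E]

open scoped RealInnerProductSpace

lemma inner_sq_add_inner_sq_le {x y : E} (hxy : ⟪x, y⟫ = 0) (hnorm : ‖y‖ = ‖x‖) (p : E) :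
    ⟪p, x⟫ ^ 2 + ⟪p, y⟫ ^ 2 ≤ ‖p‖ ^ 2 * ‖x‖ ^ 2 := by
  set s := ⟪p, x⟫ ^ 2 + ⟪p, y⟫ ^ 2 with hs
  -- Cauchy–Schwarz against the projection of `p` to the plane of `x` and `y`, up to scale.
  set w := ⟪p, x⟫ • x + ⟪p, y⟫ • y
  have inner_w : ⟪p, w⟫ = s := by
    simp only [w, hs, inner_add_right, inner_smul_right]
    ring
  have norm_w : ‖w‖ ^ 2 = s * ‖x‖ ^ 2 := by
    rw [norm_add_sq_real, norm_smul, norm_smul, hnorm, mul_pow, mul_pow, inner_smul_left,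
      inner_smul_right, hxy, hs, Real.norm_eq_abs, Real.norm_eq_abs, sq_abs, sq_abs]
    ring
  have cauchy_schwarz : s * s ≤ s * (‖p‖ ^ 2 * ‖x‖ ^ 2) :=
    calc s * s = |⟪p, w⟫| ^ 2 := by rw [inner_w, sq_abs, sq]
      _ ≤ (‖p‖ * ‖w‖) ^ 2 := by gcongr; exact abs_real_inner_le_norm p w
      _ = s * (‖p‖ ^ 2 * ‖x‖ ^ 2) := by rw [mul_pow, norm_w]; ring
  rcases (by positivity : 0 ≤ s).eq_or_lt with hs₀ | hs₀
  · rw [← hs₀]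
    positivity
  · exact le_of_mul_le_mul_left cauchy_schwarz hs₀

end InnerProductSpace

section LeviForm

open scoped Matrix.Norms.L2Operator

variable {m : Type*} [Fintype m]

lemma evnorm_eq_norm_toLp (x : m → ℝ) : evnorm x = ‖WithLp.toLp 2 x‖ := by
  simp only [evnorm, EuclideanSpace.norm_eq, Real.norm_eq_abs, sq_abs]

lemma evnorm_sq (x : m → ℝ) : evnorm x ^ 2 = x ⬝ᵥ x := by
  rw [evnorm, Real.sq_sqrt (by positivity)]
  simp only [dotProduct, sq]

lemma evnorm_pos {x : m → ℝ} (hx : x ≠ 0) : 0 < evnorm x := by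
  rwa [evnorm_eq_norm_toLp, norm_pos_iff, ne_eq, WithLp.toLp_eq_zero]

lemma dotProduct_eq_inner_toLp (x y : m → ℝ) :
    x ⬝ᵥ y = inner ℝ (WithLp.toLp 2 x) (WithLp.toLp 2 y) := by
  rw [EuclideanSpace.inner_toLp_toLp, star_trivial, dotProduct_comm]

lemma dotProduct_sq_add_dotProduct_sq_le {x y : m → ℝ} (hxy : x ⬝ᵥ y = 0)
    (hnorm : y ⬝ᵥ y = x ⬝ᵥ x) (p : m → ℝ) :
    (p ⬝ᵥ x) ^ 2 + (p ⬝ᵥ y) ^ 2 ≤ evnorm p ^ 2 * evnorm x ^ 2 := by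
  simp only [dotProduct_eq_inner_toLp, evnorm_eq_norm_toLp] at *
  refine inner_sq_add_inner_sq_le hxy ?_ _
  rwa [real_inner_self_eq_norm_sq, real_inner_self_eq_norm_sq,
    sq_eq_sq₀ (norm_nonneg _) (norm_nonneg _)] at hnorm

/-- The (not necessarily symmetric) matrix of the quadratic form `LeviQ J D A`, which reduces
estimates of the Levi form to estimates of a matrix norm. -/
def leviMatrix (J D A : Matrix m m ℝ) : Matrix m m ℝ :=
  D + Jᵀ * D * J + (A - Aᵀ) * J

lemma leviQ_eq_dotProduct_leviMatrix_mulVec (J D A : Matrix m m ℝ) (X : m → ℝ) :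
    LeviQ J D A X = X ⬝ᵥ leviMatrix J D A *ᵥ X := by
  simp only [LeviQ, leviMatrix, add_mulVec, dotProduct_add, ← mulVec_mulVec, mulVec_transpose,
    dotProduct_comm X (_ ᵥ* J), ← dotProduct_mulVec, dotProduct_comm (D *ᵥ _)]

lemma leviMatrix_add_sub_leviMatrix (J H D A : Matrix m m ℝ) :
    leviMatrix (J + H) D A - leviMatrix J D 0 =
      Jᵀ * D * H + Hᵀ * D * J + Hᵀ * D * H + (A - Aᵀ) * (J + H) := by
  simp only [leviMatrix, transpose_add, transpose_zero]
  noncomm_ring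

variable [DecidableEq m]

lemma abs_dotProduct_mulVec_self_le (M : Matrix m m ℝ) (x : m → ℝ) :
    |x ⬝ᵥ M *ᵥ x| ≤ ‖M‖ * evnorm x ^ 2 := by
  rw [dotProduct_eq_inner_toLp, evnorm_eq_norm_toLp]
  calc |inner ℝ (WithLp.toLp 2 x) (WithLp.toLp 2 (M *ᵥ x))|
      ≤ ‖WithLp.toLp 2 x‖ * ‖WithLp.toLp 2 (M *ᵥ x)‖ := abs_real_inner_le_norm _ _
    _ ≤ ‖WithLp.toLp 2 x‖ * (‖M‖ * ‖WithLp.toLp 2 x‖) := by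
        gcongr
        exact l2_opNorm_mulVec M (WithLp.toLp 2 x)
    _ = ‖M‖ * ‖WithLp.toLp 2 x‖ ^ 2 := by ring

lemma l2_opNorm_transpose (M : Matrix m m ℝ) : ‖Mᵀ‖ = ‖M‖ := by
  rw [← conjTranspose_eq_transpose_of_trivial, l2_opNorm_conjTranspose]

lemma l2_opNorm_le_of_transpose_mul_self {M : Matrix m m ℝ} {c : ℝ} (hc : 0 ≤ c)
    (hM : Mᵀ * M = c ^ 2 • (1 : Matrix m m ℝ)) : ‖M‖ ≤ c := by
  have norm_one_le : ‖(1 : Matrix m m ℝ)‖ ≤ 1 := by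
    rw [cstar_norm_def, map_one]
    exact ContinuousLinearMap.norm_id_le
  refine abs_le_of_sq_le_sq' ?_ hc |>.2
  calc ‖M‖ ^ 2 = ‖Mᵀ * M‖ := by
        rw [← conjTranspose_eq_transpose_of_trivial, l2_opNorm_conjTranspose_mul_self, sq]
    _ = c ^ 2 * ‖(1 : Matrix m m ℝ)‖ := by rw [hM, norm_smul, Real.norm_of_nonneg (sq_nonneg c)]
    _ ≤ c ^ 2 := mul_le_of_le_one_right (sq_nonneg c) norm_one_le

lemma norm_leviMatrix_add_sub_leviMatrix_le (J H D A : Matrix m m ℝ) :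
    ‖leviMatrix (J + H) D A - leviMatrix J D 0‖ ≤
      ‖D‖ * (2 * ‖J‖ * ‖H‖ + ‖H‖ ^ 2) + 2 * ‖A‖ * (‖J‖ + ‖H‖) := by
  have norm_sandwich_le (K L : Matrix m m ℝ) : ‖Kᵀ * D * L‖ ≤ ‖K‖ * ‖D‖ * ‖L‖ := by
    simpa only [l2_opNorm_transpose] using norm_mul₃_le (a := Kᵀ) (b := D) (c := L)
  have norm_skew_mul_le : ‖(A - Aᵀ) * (J + H)‖ ≤ (‖A‖ + ‖A‖) * (‖J‖ + ‖H‖) := by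
    refine (norm_mul_le _ _).trans ?_
    gcongr
    · simpa only [l2_opNorm_transpose] using norm_sub_le A Aᵀ
    · exact norm_add_le J H
  rw [leviMatrix_add_sub_leviMatrix]
  calc _ ≤ ‖Jᵀ * D * H‖ + ‖Hᵀ * D * J‖ + ‖Hᵀ * D * H‖ + ‖(A - Aᵀ) * (J + H)‖ := norm_add₄_le
    _ ≤ ‖J‖ * ‖D‖ * ‖H‖ + ‖H‖ * ‖D‖ * ‖J‖ + ‖H‖ * ‖D‖ * ‖H‖ + (‖A‖ + ‖A‖) * (‖J‖ + ‖H‖) := by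
        gcongr <;> apply norm_sandwich_le
    _ = _ := by ring

theorem abs_leviQ_add_sub_leviQ_le (J H D A : Matrix m m ℝ) (X : m → ℝ) :
    |LeviQ (J + H) D A X - LeviQ J D 0 X| ≤
      (‖D‖ * (2 * ‖J‖ * ‖H‖ + ‖H‖ ^ 2) + 2 * ‖A‖ * (‖J‖ + ‖H‖)) * evnorm X ^ 2 := by
  rw [leviQ_eq_dotProduct_leviMatrix_mulVec, leviQ_eq_dotProduct_leviMatrix_mulVec,
    ← dotProduct_sub, ← sub_mulVec]
  refine (abs_dotProduct_mulVec_self_le _ X).trans ?_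
  gcongr
  exact norm_leviMatrix_add_sub_leviMatrix_le J H D A

/-- The Hessian of `x ↦ ln ‖x‖` at `p ≠ 0`, given by its closed formula
`(1/‖p‖²) • 1 - (2/‖p‖⁴) • p pᵀ`. -/
noncomputable def logNormHessian (p : m → ℝ) : Matrix m m ℝ :=
  (1 / evnorm p ^ 2) • (1 : Matrix m m ℝ) - (2 / evnorm p ^ 4) • vecMulVec p p

lemma logNormHessian_transpose_mul_self {p : m → ℝ} (hp : p ≠ 0) :
    (logNormHessian p)ᵀ * logNormHessian p = (1 / evnorm p ^ 2) ^ 2 • (1 : Matrix m m ℝ) := by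
  have hp₀ := (evnorm_pos hp).ne'
  have vecMulVec_sq : vecMulVec p p * vecMulVec p p = evnorm p ^ 2 • vecMulVec p p := by
    rw [vecMulVec_mul_vecMulVec, evnorm_sq, vecMulVec_smul]
  simp only [logNormHessian, transpose_sub, transpose_smul, transpose_one, transpose_vecMulVec,
    sub_mul, mul_sub, smul_mul_assoc, mul_smul_comm, one_mul, mul_one, vecMulVec_sq]
  match_scalars <;> field_simp
  ring

lemma dotProduct_logNormHessian_mulVec_self (p x : m → ℝ) :
    x ⬝ᵥ logNormHessian p *ᵥ x =
      evnorm x ^ 2 / evnorm p ^ 2 - 2 * (p ⬝ᵥ x) ^ 2 / evnorm p ^ 4 := by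
  rw [logNormHessian, sub_mulVec, smul_mulVec, smul_mulVec, one_mulVec, vecMulVec_mulVec,
    op_smul_eq_smul, evnorm_sq x]
  simp only [dotProduct_sub, dotProduct_smul, smul_eq_mul, dotProduct_comm x p]
  ring

theorem leviQ_logNormHessian_nonneg {J : Matrix m m ℝ} (hskew : Jᵀ = -J) (hsq : J * J = -1)
    {p : m → ℝ} (hp : p ≠ 0) (X : m → ℝ) : 0 ≤ LeviQ J (logNormHessian p) 0 X := by
  have orthogonal : X ⬝ᵥ J *ᵥ X = 0 := by
    have := dotProduct_transpose_mulVec J X X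
    rw [hskew, neg_mulVec, dotProduct_neg] at this
    linarith
  have isometric : J *ᵥ X ⬝ᵥ J *ᵥ X = X ⬝ᵥ X := by
    rw [dotProduct_comm, ← dotProduct_transpose_mulVec, mulVec_mulVec, hskew, neg_mul, hsq,
      neg_neg, one_mulVec]
  have bessel := dotProduct_sq_add_dotProduct_sq_le orthogonal isometric p
  have := evnorm_pos hp
  calc 0 ≤ 2 * (evnorm p ^ 2 * evnorm X ^ 2 - ((p ⬝ᵥ X) ^ 2 + (p ⬝ᵥ J *ᵥ X) ^ 2)) /
        evnorm p ^ 4 := by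
        have := sub_nonneg.2 bessel
        positivity
    _ = LeviQ J (logNormHessian p) 0 X := by
        simp only [LeviQ, dotProduct_logNormHessian_mulVec_self, evnorm_sq (J *ᵥ X), isometric,
          ← evnorm_sq X, transpose_zero, sub_zero, zero_mulVec, dotProduct_zero]
        field_simp
        ring

theorem stmt18_general {J : Matrix m m ℝ} (hskew : Jᵀ = -J) (hsq : J * J = -1)
    {p : m → ℝ} (hp : p ≠ 0) {H A : Matrix m m ℝ} {h₀ h₁ : ℝ} (hH : opnorm H ≤ h₀)
    (hA : opnorm A ≤ h₁ / evnorm p) (X : m → ℝ) :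
    -(evnorm X ^ 2) * ((2 / evnorm p ^ 2) * h₀ + (1 / evnorm p ^ 2) * h₀ ^ 2
        + (2 / evnorm p) * (1 + h₀) * h₁) ≤
      LeviQ (J + H) (logNormHessian p) A X := by
  have norm_H : ‖H‖ ≤ h₀ := hH
  have norm_A : ‖A‖ ≤ h₁ / evnorm p := hA
  have norm_J : ‖J‖ ≤ 1 :=
    l2_opNorm_le_of_transpose_mul_self zero_le_one (by simp [hskew, hsq])
  have norm_D : ‖logNormHessian p‖ ≤ 1 / evnorm p ^ 2 :=
    l2_opNorm_le_of_transpose_mul_self (by positivity) (logNormHessian_transpose_mul_self hp)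
  have psh := leviQ_logNormHessian_nonneg hskew hsq hp X
  have perturbation : |LeviQ (J + H) (logNormHessian p) A X - LeviQ J (logNormHessian p) 0 X| ≤
      (1 / evnorm p ^ 2 * (2 * 1 * h₀ + h₀ ^ 2) + 2 * (h₁ / evnorm p) * (1 + h₀)) *
        evnorm X ^ 2 := by
    refine (abs_leviQ_add_sub_leviQ_le J H (logNormHessian p) A X).trans ?_
    have := (norm_nonneg H).trans norm_H
    have := (norm_nonneg A).trans norm_A
    gcongr
  calc _ = -((1 / evnorm p ^ 2 * (2 * 1 * h₀ + h₀ ^ 2) + 2 * (h₁ / evnorm p) * (1 + h₀)) *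
        evnorm X ^ 2) := by ring
    _ ≤ LeviQ (J + H) (logNormHessian p) A X - LeviQ J (logNormHessian p) 0 X :=
        neg_le_of_abs_le perturbation
    _ ≤ _ := sub_le_self _ psh

end LeviForm

/-- For `p ∈ ℝ^{2n} ∖ {0}`, let
`D_ln = (1/‖p‖²)·I − (2/‖p‖⁴)·p·pᵀ` (the real Hessian of `x ↦ ln‖x‖` at `p`). For
matrices `H, A` and `h₀, h₁ ≥ 0` with `‖H‖ ≤ h₀` and `‖A‖ ≤ h₁/‖p‖`:
`Q(J_st + H, D_ln, A, X) ≥ −‖X‖²((2/‖p‖²)h₀ + (1/‖p‖²)h₀² + (2/‖p‖)(1 + h₀)h₁)`. -/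
theorem stmt18 {n : ℕ} (hn : 1 ≤ n) (p : (Fin n ⊕ Fin n) → ℝ) (hp : p ≠ 0)
    (H A : Matrix (Fin n ⊕ Fin n) (Fin n ⊕ Fin n) ℝ) (h₀ h₁ : ℝ)
    (hh₀ : 0 ≤ h₀) (hh₁ : 0 ≤ h₁) (hH : opnorm H ≤ h₀)
    (hA : opnorm A ≤ h₁ / evnorm p) (X : (Fin n ⊕ Fin n) → ℝ) :
    -(evnorm X ^ 2) * ((2 / evnorm p ^ 2) * h₀ + (1 / evnorm p ^ 2) * h₀ ^ 2
        + (2 / evnorm p) * (1 + h₀) * h₁) ≤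
      LeviQ (Jstd n + H)
        ((1 / evnorm p ^ 2) • (1 : Matrix (Fin n ⊕ Fin n) (Fin n ⊕ Fin n) ℝ)
          - (2 / evnorm p ^ 4) • Matrix.vecMulVec p p) A X :=
  stmt18_general (J_transpose (Fin n) ℝ) (J_squared (Fin n) ℝ) hp hH hA X
end
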